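/- Let p be an odd prime, q = p^m, α a primitive element of F_q, and T = (q−1)/(p−1). Let w = (a_0, …, a_{k−1}) ∈ F_q^k be a nonzero vector with R(w) = m − 1. Let r be a positive divisor of p − 1 with gcd(r, m) = 1, set n' = (q−1)/r, let d be an integer with gcd(d, q−1) = 1, and let ψ be an F_p-linear bijection of F_q. Define r sequences S^i = (s^i_t)_{t=0}^{n'−1}, 0 ≤ i ≤ r−1, by s^i_t = 𝒯(ψ(α^{d(i+rt)})). Then for all i, j ∈ {0, …, r−1}, all τ ∈ {0, …, n'−1} and all l ∈ {0, …, n'−1}, excluding the case (i = j and τ = 0), and for every window length 1 ≤ L ≤ n', the partial Hamming correlation satisfies H_{S^i, S^j}(τ; l | L) ≤ ⌈L/T⌉. -/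

import Mathlib

/-!
Write `g z = α ^ (d * z)`, so that `g` is a character of `ℤ` with kernel `(q - 1)ℤ`. By linearity,
`s^i_t = s^j_{t+τ}` says that `ψ (c * g (r t))` is trace-orthogonal to every `w idx`, where
`c = g i - g (j + r τ)`, and `c ≠ 0` because `i` and `j + r τ` are distinct integers in `[0, q - 1)`.
The trace form is nondegenerate and `R(w) = m - 1`, so the vectors orthogonal to `w` form a line
over `F_p`. Two coincidences `t₁`, `t₂` therefore give `g (r (t₂ - t₁)) ∈ F_p^×`, whence
`T ∣ r (t₂ - t₁)`. As `T = 1 + p + ⋯ + p^(m-1) ≡ m (mod r)`, `gcd(r, T) = gcd(r, m) = 1` and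
`T ∣ t₂ - t₁`: all coincidences lie in one residue class modulo `T`, and a window of
length `L` meets such a class at most `⌈L / T⌉` times.
-/

/-- Partial Hamming correlation of the length-`N` (cyclically indexed) sequences
`x` and `y`, over a window of length `L` starting at `l`, with shift `τ`. -/
noncomputable def Hcorr {A : Type*} (N L l τ : ℕ) (x y : ℕ → A) : ℕ :=
  Nat.card {t : ℕ | l ≤ t ∧ t < l + L ∧ x (t % N) = y ((t + τ) % N)}

/-- A set of integers in a window of length `L` that lies in a single class modulo `T` has at most
`⌈L / T⌉` elements. -/
lemma card_window_le (S : Set ℕ) (l L T : ℕ) (hT : 0 < T) (hL : 1 ≤ L)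
    (hS : ∀ t ∈ S, l ≤ t ∧ t < l + L)
    (hmod : ∀ t₁ ∈ S, ∀ t₂ ∈ S, (T : ℤ) ∣ (t₂ : ℤ) - t₁) :
    Nat.card S ≤ (L + T - 1) / T := by
  have hlt : ∀ t : S, (t.1 - l) / T < (L + T - 1) / T := by
    intro t
    obtain ⟨h1, h2⟩ := hS t.1 t.2
    have h3 : (L + T - 1) / T = (L - 1) / T + 1 := by
      rw [← Nat.add_div_right _ hT]
      congr 1
      omega
    rw [h3]
    exact Nat.lt_succ_of_le (Nat.div_le_div_right (by omega))
  have hinj : Function.Injective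
      (fun t : S => (⟨(t.1 - l) / T, hlt t⟩ : Fin ((L + T - 1) / T))) := by
    intro a b hab
    have hdiv : (a.1 - l) / T = (b.1 - l) / T := congrArg Fin.val hab
    have ha := (hS a.1 a.2).1
    have hb := (hS b.1 b.2).1
    have hab' : (a.1 - l) % T = (b.1 - l) % T := by
      have h : (a.1 - l) ≡ (b.1 - l) [MOD T] := by
        rw [Nat.modEq_iff_dvd, Nat.cast_sub ha, Nat.cast_sub hb]
        simpa using hmod a.1 a.2 b.1 b.2
      exact h
    have h1 := Nat.div_add_mod (a.1 - l) T
    rw [hdiv, hab', Nat.div_add_mod] at h1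
    exact Subtype.ext (by omega)
  simpa using Nat.card_le_card_of_injective _ hinj

/-- A divisor `r` of `p - 1` coprime to `m` is coprime to `(p^m - 1) / (p - 1)`, because this
quotient is `1 + p + ⋯ + p^(m-1) ≡ m (mod r)`. -/
lemma coprime_repunit (p m r : ℕ) (hp : 2 ≤ p) (hrp : r ∣ p - 1) (hrm : Nat.Coprime r m) :
    Nat.Coprime r ((p ^ m - 1) / (p - 1)) := by
  rw [← Nat.geomSum_eq hp]
  have hp1 : p ≡ 1 [MOD r] := ((Nat.modEq_iff_dvd' (by omega)).2 hrp).symm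
  have hmod : ∀ n : ℕ, (∑ i ∈ Finset.range n, p ^ i) ≡ n [MOD r] := by
    intro n
    induction n with
    | zero => rfl
    | succ n ih =>
      rw [Finset.sum_range_succ]
      exact ih.add (by simpa using hp1.pow n)
  rw [Nat.Coprime, Nat.gcd_comm, (hmod m).gcd_eq, Nat.gcd_comm]
  exact hrm

/-- Integer powers of a primitive element are `1` exactly at multiples of `q - 1`. -/
lemma zpow_eq_one_iff_of_primitive {F : Type*} [Field F] [Fintype F] (α : F) (hα0 : α ≠ 0)
    (hα : ∀ x : F, x ≠ 0 → ∃ s : ℕ, α ^ s = x) (z : ℤ) :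
    α ^ z = 1 ↔ ((Fintype.card F - 1 : ℕ) : ℤ) ∣ z := by
  classical
  have hord : orderOf (Units.mk0 α hα0) = Fintype.card F - 1 := by
    rw [← Fintype.card_units, ← Nat.card_eq_fintype_card]
    refine orderOf_eq_card_of_forall_mem_zpowers fun x => ?_
    obtain ⟨n, hn⟩ := hα x x.ne_zero
    exact ⟨n, Units.ext (by simpa using hn)⟩
  rw [← hord, orderOf_dvd_iff_zpow_eq_one, Units.ext_iff]
  simp

/-- If the entries of `w` span a hyperplane, then the vectors trace-orthogonal to all of them are
scalar multiples, over the prime field, of any nonzero one among them. -/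
lemma exists_smul_eq_of_trace_orthogonal (p m k : ℕ) [Fact p.Prime] (hm : 0 < m)
    {F : Type*} [Field F] [Fintype F] [Algebra (ZMod p) F]
    (hcard : Fintype.card F = p ^ m) (w : Fin k → F)
    (hR : Module.finrank (ZMod p) (Submodule.span (ZMod p) (Set.range w)) = m - 1)
    (x y : F) (hx0 : x ≠ 0)
    (hx : ∀ idx, Algebra.trace (ZMod p) F (w idx * x) = 0)
    (hy : ∀ idx, Algebra.trace (ZMod p) F (w idx * y) = 0) :
    ∃ a : ZMod p, a • x = y := by
  have hfin : Module.finrank (ZMod p) F = m := by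
    have h := Module.card_eq_pow_finrank (K := ZMod p) (V := F)
    rw [hcard, ZMod.card] at h
    exact (Nat.pow_right_injective (Fact.out : p.Prime).two_le h).symm
  set W := Submodule.span (ZMod p) (Set.range w) with hW
  have hmem : ∀ z : F, (∀ idx, Algebra.trace (ZMod p) F (w idx * z) = 0) →
      z ∈ (Algebra.traceForm (ZMod p) F).orthogonal W := by
    intro z hz
    rw [LinearMap.BilinForm.mem_orthogonal_iff]
    intro u hu
    change Algebra.traceForm (ZMod p) F u z = 0
    induction hu using Submodule.span_induction with
    | mem u hu =>
      obtain ⟨idx, rfl⟩ := hu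
      simpa [Algebra.traceForm_apply] using hz idx
    | zero => simp
    | add u v _ _ hu hv => simp [hu, hv]
    | smul a u _ hu => simp [hu]
  have hrank : Module.finrank (ZMod p) ((Algebra.traceForm (ZMod p) F).orthogonal W) = 1 := by
    rw [LinearMap.BilinForm.finrank_orthogonal (traceForm_nondegenerate (ZMod p) F), hfin, hR]
    omega
  obtain ⟨a, ha⟩ := (finrank_eq_one_iff_of_nonzero' (⟨x, hmem x hx⟩ :
    (Algebra.traceForm (ZMod p) F).orthogonal W) (by simpa [Subtype.ext_iff] using hx0)).1 hrank
      ⟨y, hmem y hy⟩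
  exact ⟨a, congrArg Subtype.val ha⟩

theorem stmt11 (p m k : ℕ) (hp : p.Prime) (hpodd : Odd p) (hm : 0 < m)
    (hk : 0 < k)
    {F : Type*} [Field F] [Fintype F] [Algebra (ZMod p) F]
    (hcard : Fintype.card F = p ^ m)
    -- α is a primitive element of F
    (α : F) (hα0 : α ≠ 0) (hα : ∀ x : F, x ≠ 0 → ∃ s : ℕ, α ^ s = x)
    (T : ℕ) (hT : T = (p ^ m - 1) / (p - 1))
    (w : Fin k → F) (hw : w ≠ 0)
    (hR : Module.finrank (ZMod p) (Submodule.span (ZMod p) (Set.range w)) = m - 1)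
    (r : ℕ) (hr : 0 < r) (hrp : r ∣ p - 1) (hrm : Nat.Coprime r m)
    (n' : ℕ) (hn' : n' = (p ^ m - 1) / r)
    (d : ℤ) (hd : Int.gcd d ((p : ℤ) ^ m - 1) = 1)
    -- ψ is an F_p-linear bijection of F
    (ψ : F → F) (hψlin : IsLinearMap (ZMod p) ψ) (hψbij : Function.Bijective ψ)
    -- the family of r sequences s^i_t = 𝒯(ψ(α^{d(i+rt)}))
    (s : ℕ → ℕ → (Fin k → ZMod p))
    (hs : ∀ (i t : ℕ) (idx : Fin k),
      s i t idx = Algebra.trace (ZMod p) F (w idx * ψ (α ^ (d * ((i : ℤ) + r * t))))) :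
    ∀ i < r, ∀ j < r, ∀ τ < n', ∀ l < n', ¬(i = j ∧ τ = 0) →
      ∀ L : ℕ, 1 ≤ L → L ≤ n' →
        Hcorr n' L l τ (s i) (s j) ≤ (L + T - 1) / T := by
  intro i hi j hj τ hτ l _ hne L hL _
  have : Fact p.Prime := ⟨hp⟩
  have hp2 := hp.two_le
  have hTmul : T * (p - 1) = p ^ m - 1 := by
    rw [hT]
    exact Nat.div_mul_cancel (Nat.sub_one_dvd_pow_sub_one p m)
  have hnmul : r * n' = p ^ m - 1 := by
    rw [hn']
    exact Nat.mul_div_cancel' (hrp.trans (Nat.sub_one_dvd_pow_sub_one p m))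
  have hq : 1 < p ^ m := Nat.one_lt_pow hm.ne' hp.one_lt
  have hTpos : 0 < T := by
    rcases Nat.eq_zero_or_pos T with h | h
    · rw [h] at hTmul
      omega
    · exact h
  have hcop : Nat.Coprime r T := hT ▸ coprime_repunit p m r hp2 hrp hrm
  have hdcop : IsCoprime ((p ^ m - 1 : ℕ) : ℤ) d := by
    rw [Nat.cast_sub hq.le]
    push_cast
    exact (Int.isCoprime_iff_gcd_eq_one.2 hd).symm
  set g : ℤ → F := fun z => α ^ (d * z) with hg
  have g_add : ∀ a b, g (a + b) = g a * g b := fun a b => by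
    simp only [hg, mul_add, zpow_add₀ hα0]
  have g_ne : ∀ a, g a ≠ 0 := fun a => zpow_ne_zero _ hα0
  have g_one : ∀ z, g z = 1 ↔ ((p ^ m - 1 : ℕ) : ℤ) ∣ z := by
    intro z
    have h := zpow_eq_one_iff_of_primitive α hα0 hα (d * z)
    rw [hcard] at h
    exact h.trans ⟨hdcop.dvd_of_dvd_mul_left, fun h => h.mul_left d⟩
  have g_eq : ∀ a b, g a = g b ↔ ((p ^ m - 1 : ℕ) : ℤ) ∣ a - b := by
    intro a b
    have h := g_add (a - b) b
    rw [sub_add_cancel] at h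
    rw [← g_one, h]
    exact mul_eq_right₀ (g_ne b)
  have g_mod : ∀ e t : ℕ, g ((e : ℤ) + r * ((t % n' : ℕ) : ℤ)) = g ((e : ℤ) + r * t) := by
    intro e t
    rw [g_eq]
    refine ⟨-((t / n' : ℕ) : ℤ), ?_⟩
    have h : (t : ℤ) = n' * ((t / n' : ℕ) : ℤ) + ((t % n' : ℕ) : ℤ) := by
      exact_mod_cast (Nat.div_add_mod t n').symm
    rw [← hnmul]
    push_cast at h ⊢
    linear_combination (-(r : ℤ)) * h
  set c : F := g i - g (j + r * τ) with hc
  have hc0 : c ≠ 0 := by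
    rw [hc, sub_ne_zero, Ne, g_eq]
    intro hdvd
    -- `i` and `j + r τ` both lie in `[0, q - 1)`, so they would have to be equal.
    have hlt : j + r * τ < p ^ m - 1 := by
      rw [← hnmul]
      calc j + r * τ < r + r * τ := by omega
        _ = r * (τ + 1) := by ring
        _ ≤ r * n' := Nat.mul_le_mul_left r hτ
    have hi' : i < p ^ m - 1 := by
      rw [← hnmul]
      exact hi.trans_le (Nat.le_mul_of_pos_right r (by omega))
    have hmod : j + r * τ ≡ i [MOD p ^ m - 1] := by
      rw [Nat.modEq_iff_dvd]
      push_cast at hdvd ⊢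
      exact hdvd
    have heq : j + r * τ = i := hmod.eq_of_lt_of_lt hlt hi'
    have hτ0 : τ = 0 := by
      by_contra h
      have := Nat.le_mul_of_pos_right r (Nat.pos_of_ne_zero h)
      omega
    subst hτ0
    exact hne ⟨by simpa using heq.symm, rfl⟩
  have hhit : ∀ t : ℕ, s i (t % n') = s j ((t + τ) % n') →
      ∀ idx, Algebra.trace (ZMod p) F (w idx * ψ (c * g (r * t))) = 0 := by
    intro t ht idx
    have h := congrFun ht idx
    rw [hs, hs] at h
    change Algebra.trace (ZMod p) F (w idx * ψ (g _)) =
      Algebra.trace (ZMod p) F (w idx * ψ (g _)) at h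
    rw [g_mod, g_mod] at h
    have hsplit : c * g (r * t) = g ((i : ℤ) + r * t) - g ((j : ℤ) + r * ((t + τ : ℕ) : ℤ)) := by
      rw [hc, sub_mul, ← g_add, ← g_add]
      congr 2
      push_cast
      ring
    rw [hsplit, hψlin.map_sub, mul_sub, map_sub, h, sub_self]
  refine card_window_le _ l L T hTpos hL (fun t ht => ⟨ht.1, ht.2.1⟩) ?_
  rintro t₁ ⟨_, _, h₁⟩ t₂ ⟨_, _, h₂⟩
  have hψ0 : ψ (c * g (r * t₁)) ≠ 0 := by
    intro h
    exact mul_ne_zero hc0 (g_ne _) (hψbij.1 (h.trans hψlin.map_zero.symm))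
  obtain ⟨a, ha⟩ := exists_smul_eq_of_trace_orthogonal p m k hm hcard w hR _ _ hψ0
    (hhit t₁ h₁) (hhit t₂ h₂)
  rw [← hψlin.map_smul] at ha
  have ha' : algebraMap (ZMod p) F a = g (r * (t₂ - t₁)) := by
    have h := hψbij.1 ha
    have h2 : g (r * (t₂ : ℤ)) = g (r * (t₂ - t₁)) * g (r * t₁) := by
      rw [← g_add]
      congr 1
      ring
    rw [Algebra.smul_def, h2] at h
    refine mul_right_cancel₀ (mul_ne_zero hc0 (g_ne (r * t₁))) (h.trans ?_)
    ring
  have ha0 : a ≠ 0 := by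
    rintro rfl
    exact g_ne _ (by simpa using ha'.symm)
  have hone : g (r * (t₂ - t₁) * ((p - 1 : ℕ) : ℤ)) = 1 := by
    have h : g (r * (t₂ - t₁) * ((p - 1 : ℕ) : ℤ)) = g (r * (t₂ - t₁)) ^ (p - 1) := by
      simp only [hg]
      rw [← zpow_natCast, ← zpow_mul, mul_assoc d]
    rw [h, ← ha', ← map_pow, ZMod.pow_card_sub_one_eq_one ha0, map_one]
  rw [g_one, ← hTmul, Nat.cast_mul] at hone
  have hp1 : ((p - 1 : ℕ) : ℤ) ≠ 0 := by
    have : p - 1 ≠ 0 := by omega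
    exact_mod_cast this
  have hdvd : (T : ℤ) ∣ r * (t₂ - t₁) := Int.dvd_of_mul_dvd_mul_right hp1 hone
  exact (Nat.isCoprime_iff_coprime.2 hcop.symm).dvd_of_dvd_mul_left hdvd
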